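/- arXiv:2507.00915 — 9 statements merged into one kernel-verified Lean document; each statement's English description precedes it below -/
import Mathlib

section
/- Let Λ be a nonempty subset of the natural numbers and let Z = ∑_{ℓ∈Λ} 2^{-ℓ} (a convergent sum with 0 < Z < ∞). Define a probability mass function on Λ by p(ℓ) = 2^{-ℓ}/Z. Then the Shannon entropy H = ∑_{ℓ∈Λ} p(ℓ) log₂(1/p(ℓ)) satisfies H ≤ 2. -/
lemma aux_congr {f g : ℕ → ℝ} {a : ℝ} (h : HasSum f a) (e : ∀ k, g k = f k) : HasSum g a := by
  rw [funext e]
  exact h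

lemma aux_tsum_le (Λ : Set ℕ) (m : ℕ) (hm : ∀ n ∈ Λ, m ≤ n) (F : ℕ → ℝ) (a : ℝ)
    (hF : Summable F) (hs : HasSum (fun k => F (k + m)) a)
    (h0 : ∀ k, k + m ∉ Λ → 0 ≤ F (k + m)) : (∑' ℓ : Λ, F ℓ) ≤ a := by
  have hi : Summable (Λ.indicator F) := hF.indicator Λ
  rw [tsum_subtype Λ F, ← hi.sum_add_tsum_nat_add m, Finset.sum_eq_zero, zero_add, ← hs.tsum_eq]
  · refine Summable.tsum_le_tsum (fun k => ?_) ((summable_nat_add_iff m).2 hi) hs.summable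
    by_cases hk : k + m ∈ Λ
    · simp [hk]
    · simpa [hk] using h0 k hk
  · intro i hi'
    apply Set.indicator_of_notMem
    intro h
    have := hm i h
    have := Finset.mem_range.1 hi'
    omega

/-- For a nonempty `Λ ⊆ ℕ` with normalizing constant
`Z = ∑_{ℓ ∈ Λ} 2^{-ℓ}` and pmf `p ℓ = 2^{-ℓ}/Z`, the Shannon entropy
`∑_{ℓ ∈ Λ} p ℓ · log₂(1/p ℓ)` is at most `2`. -/
theorem knuth_yao_level_entropy_le_two
    (Λ : Set ℕ) (hΛ : Λ.Nonempty)
    (Z : ℝ) (hZ : Z = ∑' ℓ : Λ, (2 : ℝ) ^ (-((ℓ : ℕ) : ℤ)))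
    (p : ℕ → ℝ) (hp : ∀ ℓ ∈ Λ, p ℓ = (2 : ℝ) ^ (-((ℓ : ℕ) : ℤ)) / Z) :
    (∑' ℓ : Λ, p ℓ * Real.logb 2 (1 / p ℓ)) ≤ 2 := by
  have hpow : ∀ n : ℕ, (2 : ℝ) ^ (-(n : ℤ)) = (1 / 2 : ℝ) ^ n := by
    intro n
    rw [zpow_neg, zpow_natCast, one_div, inv_pow]
  simp only [hpow] at hZ hp
  obtain ⟨m, hmΛ, hm⟩ : ∃ m ∈ Λ, ∀ n ∈ Λ, m ≤ n :=
    ⟨sInf Λ, Nat.sInf_mem hΛ, fun n hn => Nat.sInf_le hn⟩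
  have hg : HasSum (fun k : ℕ => (1 / 2 : ℝ) ^ k) 2 := hasSum_geometric_two
  have hk : HasSum (fun k : ℕ => (k : ℝ) * (1 / 2 : ℝ) ^ k) 2 := by
    have := hasSum_coe_mul_geometric_of_norm_lt_one (𝕜 := ℝ) (r := 1 / 2) (by norm_num)
    norm_num at this ⊢
    exact this
  have hgΛ : Summable (fun ℓ : Λ => (1 / 2 : ℝ) ^ (ℓ : ℕ)) := hg.summable.subtype Λ
  have hkΛ : Summable (fun ℓ : Λ => ((ℓ : ℕ) : ℝ) * (1 / 2 : ℝ) ^ (ℓ : ℕ)) :=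
    hk.summable.subtype Λ
  have hZpos : 0 < Z := by
    rw [hZ]
    exact hgΛ.tsum_pos (fun _ => by positivity) ⟨m, hmΛ⟩ (by positivity)
  have hZle : Z ≤ 2 * (1 / 2 : ℝ) ^ m := by
    rw [hZ]
    refine aux_tsum_le Λ m hm (fun n => (1 / 2 : ℝ) ^ n) _ hg.summable ?_ (fun _ _ => by positivity)
    simpa only [pow_add] using hg.mul_right ((1 / 2 : ℝ) ^ m)
  have hlog : Real.logb 2 Z ≤ 1 - m := by
    rw [Real.logb_le_iff_le_rpow (by norm_num) hZpos, Real.rpow_sub (by norm_num),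
      Real.rpow_one, Real.rpow_natCast]
    refine hZle.trans (le_of_eq ?_)
    rw [one_div, inv_pow, div_eq_mul_inv]
  have hmean : (∑' ℓ : Λ, (((ℓ : ℕ) : ℝ) - m - 1) * (1 / 2 : ℝ) ^ (ℓ : ℕ)) ≤ 0 := by
    refine aux_tsum_le Λ m hm (fun n => ((n : ℝ) - m - 1) * (1 / 2 : ℝ) ^ n) 0 ?_ ?_ ?_
    · have := hk.summable.sub (hg.summable.mul_left ((m : ℝ) + 1))
      refine this.congr (fun n => ?_)
      ring
    · have := (hk.sub hg).mul_right ((1 / 2 : ℝ) ^ m)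
      rw [sub_self, zero_mul] at this
      refine aux_congr this (fun k => ?_)
      push_cast
      rw [pow_add]
      ring
    · intro k hkm
      have h1 : 1 ≤ k := by
        rcases Nat.eq_zero_or_pos k with h | h
        · subst h
          simp [hmΛ] at hkm
        · exact h
      have h1' : (1 : ℝ) ≤ k := by exact_mod_cast h1
      push_cast
      exact mul_nonneg (by linarith) (by positivity)
  have hterm : ∀ ℓ : Λ, p ℓ * Real.logb 2 (1 / p ℓ) =
      (((ℓ : ℕ) : ℝ) * (1 / 2 : ℝ) ^ (ℓ : ℕ)) * Z⁻¹
        + (1 / 2 : ℝ) ^ (ℓ : ℕ) * (Z⁻¹ * Real.logb 2 Z) := by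
    intro ℓ
    have : Real.logb 2 (1 / p ℓ) = (ℓ : ℕ) + Real.logb 2 Z := by
      have h : 1 / p ℓ = 2 ^ (ℓ : ℕ) * Z := by
        rw [hp ℓ ℓ.2, one_div_div, one_div, inv_pow, div_inv_eq_mul, mul_comm]
      rw [h, Real.logb_mul (by positivity) hZpos.ne', Real.logb_pow]
      simp
    rw [this, hp ℓ ℓ.2]
    ring
  have hsplit : (∑' ℓ : Λ, (((ℓ : ℕ) : ℝ) - m - 1) * (1 / 2 : ℝ) ^ (ℓ : ℕ)) =
      (∑' ℓ : Λ, ((ℓ : ℕ) : ℝ) * (1 / 2 : ℝ) ^ (ℓ : ℕ)) - Z * (m + 1) := by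
    rw [hZ, ← hgΛ.tsum_mul_right, ← hkΛ.tsum_sub (hgΛ.mul_right _)]
    exact tsum_congr (fun ℓ => by ring)
  rw [hsplit] at hmean
  rw [tsum_congr hterm, (hkΛ.mul_right _).tsum_add (hgΛ.mul_right _), hkΛ.tsum_mul_right,
    hgΛ.tsum_mul_right, ← hZ, mul_inv_cancel_left₀ hZpos.ne', ← div_eq_mul_inv]
  have : (∑' ℓ : Λ, ((ℓ : ℕ) : ℝ) * (1 / 2 : ℝ) ^ (ℓ : ℕ)) / Z ≤ m + 1 := by
    rw [div_le_iff₀ hZpos]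
    linarith
  linarith
end

section
/- Let Λ be a nonempty subset of the natural numbers, Z = ∑_{ℓ∈Λ} 2^{-ℓ}, and p(ℓ) = 2^{-ℓ}/Z for ℓ ∈ Λ. Then the Shannon entropy ∑_{ℓ∈Λ} p(ℓ) log₂(1/p(ℓ)) equals 2 if and only if Λ = {λ, λ+1, λ+2, …} for some natural number λ, i.e., Λ consists of all naturals at least its minimum (in which case L − λ follows the geometric distribution with success rate 1/2). -/
lemma ky_shift (m : ℕ) (g : ℕ → ℝ) (A : ℝ) (h : HasSum (fun k => g (k + m)) A) :
    HasSum ((Set.Ici m).indicator g) A := by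
  have hi : Function.Injective (fun k : ℕ => k + m) := fun a b h => by simpa using h
  rw [← hi.hasSum_iff]
  · convert h using 2 with k
    simp
  · intro x hx
    apply Set.indicator_of_notMem
    intro hm
    exact hx ⟨x - m, Nat.sub_add_cancel hm⟩

lemma ky_Z (m : ℕ) : HasSum ((Set.Ici m).indicator (fun l : ℕ => (1 / 2 : ℝ) ^ l))
    (2 * (1 / 2) ^ m) := by
  apply ky_shift
  simpa only [pow_add] using hasSum_geometric_two.mul_right ((1 / 2 : ℝ) ^ m)

lemma ky_M (m : ℕ) : HasSum ((Set.Ici m).indicator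
    (fun l : ℕ => ((l : ℝ) - m - 1) * (1 / 2 : ℝ) ^ l)) 0 := by
  apply ky_shift
  have h1 : HasSum (fun n : ℕ => (n : ℝ) * (1 / 2 : ℝ) ^ n) ((1 / 2) / (1 - 1 / 2) ^ 2) :=
    hasSum_coe_mul_geometric_of_norm_lt_one (by norm_num)
  have h2 := (h1.sub hasSum_geometric_two).mul_right ((1 / 2 : ℝ) ^ m)
  have e : (fun k : ℕ => (((k + m : ℕ) : ℝ) - m - 1) * (1 / 2 : ℝ) ^ (k + m)) =
      fun i : ℕ => ((i : ℝ) * (1 / 2 : ℝ) ^ i - (1 / 2) ^ i) * (1 / 2) ^ m := by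
    ext k
    push_cast
    ring
  have e0 : (0 : ℝ) = (1 / 2 / (1 - 1 / 2) ^ 2 - 2) * (1 / 2) ^ m := by norm_num
  rw [e, e0]
  exact h2

/-- For a nonempty `Λ ⊆ ℕ` with normalizing constant
`Z = ∑_{ℓ ∈ Λ} 2^{-ℓ}` and pmf `p ℓ = 2^{-ℓ}/Z`, the Shannon entropy
`∑_{ℓ ∈ Λ} p ℓ · log₂(1/p ℓ)` equals `2` if and only if `Λ` is an upper tail
`{λ, λ+1, λ+2, …}` of the naturals (in which case the pmf is a shifted
geometric distribution with success rate `1/2`). -/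
theorem knuth_yao_level_entropy_eq_two_iff
    (Λ : Set ℕ) (hΛ : Λ.Nonempty)
    (Z : ℝ) (hZ : Z = ∑' ℓ : Λ, (2 : ℝ) ^ (-((ℓ : ℕ) : ℤ)))
    (p : ℕ → ℝ) (hp : ∀ ℓ ∈ Λ, p ℓ = (2 : ℝ) ^ (-((ℓ : ℕ) : ℤ)) / Z) :
    (∑' ℓ : Λ, p ℓ * Real.logb 2 (1 / p ℓ)) = 2 ↔
      ∃ lam : ℕ, Λ = Set.Ici lam := by
  classical
  have hz : ∀ l : ℕ, (2 : ℝ) ^ (-(l : ℤ)) = (1 / 2) ^ l := by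
    intro l
    simp [zpow_neg]
  simp only [hz] at hZ hp
  set g : ℕ → ℝ := fun l => (1 / 2 : ℝ) ^ l with hg
  have sg : Summable g := summable_geometric_two
  have sM : Summable (fun l : ℕ => (l : ℝ) * (1 / 2 : ℝ) ^ l) :=
    (hasSum_coe_mul_geometric_of_norm_lt_one (by norm_num)).summable
  have hZs : HasSum (fun l : Λ => g l) Z := by
    rw [hZ]; exact (sg.subtype Λ).hasSum
  obtain ⟨M, hM⟩ : ∃ M, HasSum (fun l : Λ => ((l : ℕ) : ℝ) * (1 / 2 : ℝ) ^ (l : ℕ)) M :=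
    ⟨_, (sM.subtype Λ).hasSum⟩
  have gpos : ∀ l, 0 < g l := fun l => by positivity
  have Zpos : 0 < Z := by
    obtain ⟨a, ha⟩ := hΛ
    exact lt_of_lt_of_le (gpos a) (le_hasSum hZs ⟨a, ha⟩ (fun j _ => (gpos _).le))
  have hH : (∑' l : Λ, p l * Real.logb 2 (1 / p l)) = M / Z + Real.logb 2 Z := by
    have h1 := ((hM.add (hZs.mul_right (Real.logb 2 Z))).div_const Z)
    have h2 : (M + Z * Real.logb 2 Z) / Z = M / Z + Real.logb 2 Z := by field_simp
    rw [← h2, ← h1.tsum_eq]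
    congr 1
    ext ⟨l, hl⟩
    have h3 : Real.logb 2 (1 / p l) = l + Real.logb 2 Z := by
      rw [hp l hl, one_div_div, Real.logb_div Zpos.ne' (by positivity), Real.logb_pow]
      simp [Real.logb_inv]
      ring
    simp only [h3]
    rw [hp l hl]
    simp only [hg]
    ring
  rw [hH]
  have hD : ∀ m : ℕ, HasSum (Λ.indicator (fun l : ℕ => ((l : ℝ) - m - 1) * (1 / 2 : ℝ) ^ l))
      (M - (m + 1) * Z) := by
    intro m
    rw [← hasSum_subtype_iff_indicator]
    have e : ((fun l : ℕ => ((l : ℝ) - m - 1) * (1 / 2 : ℝ) ^ l) ∘ Subtype.val : Λ → ℝ) =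
        fun l : Λ => ((l : ℕ) : ℝ) * (1 / 2 : ℝ) ^ (l : ℕ) - ((m : ℝ) + 1) * g l := by
      ext l
      simp only [hg, Function.comp]
      ring
    rw [e]
    exact hM.sub (hZs.mul_left ((m : ℝ) + 1))
  have hZi : HasSum (Λ.indicator g) Z := by
    rw [← hasSum_subtype_iff_indicator]; exact hZs
  have hlog : ∀ m : ℕ, Real.logb 2 (2 * (1 / 2) ^ m) = 1 - m := by
    intro m
    rw [Real.logb_mul (by norm_num) (by positivity), Real.logb_pow]
    simp [Real.logb_inv]
    ring
  constructor
  · intro h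
    obtain ⟨m, hm, hmin⟩ : ∃ m ∈ Λ, ∀ l ∈ Λ, m ≤ l :=
      ⟨sInf Λ, Nat.sInf_mem hΛ, fun l hl => Nat.sInf_le hl⟩
    refine ⟨m, ?_⟩
    have hMle : M - (m + 1) * Z ≤ 0 := by
      refine hasSum_le ?_ (hD m) (ky_M m)
      intro l
      by_cases hl : l ∈ Λ
      · have : l ∈ Set.Ici m := hmin l hl
        rw [Set.indicator_of_mem hl, Set.indicator_of_mem this]
      · rw [Set.indicator_of_notMem hl]
        by_cases hl2 : l ∈ Set.Ici m
        · rw [Set.indicator_of_mem hl2]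
          have h4 : m + 1 ≤ l := by
            have : m ≠ l := fun e => hl (e ▸ hm)
            have : m ≤ l := hl2
            omega
          have h5 : (m : ℝ) + 1 ≤ l := by exact_mod_cast h4
          apply mul_nonneg
          · linarith
          · positivity
        · rw [Set.indicator_of_notMem hl2]
    have hMZ : M / Z ≤ m + 1 := by
      rw [div_le_iff₀ Zpos]; linarith
    have hsub : Λ ⊆ Set.Ici m := hmin
    by_contra hne
    obtain ⟨a, ha, ha'⟩ := Set.exists_of_ssubset (hsub.ssubset_of_ne hne)
    have hlt : Z < 2 * (1 / 2) ^ m := by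
      refine hasSum_lt (i := a) ?_ ?_ hZi (ky_Z m)
      · exact Set.indicator_le_indicator_of_subset hsub (fun l => (gpos l).le)
      · rw [Set.indicator_of_notMem ha', Set.indicator_of_mem ha]
        exact gpos a
    have h6 := Real.logb_lt_logb (b := 2) (by norm_num) Zpos hlt
    rw [hlog] at h6
    linarith
  · rintro ⟨m, rfl⟩
    have e1 := hZi.unique (ky_Z m)
    have e2 := (hD m).unique (ky_M m)
    have e3 : M / Z = m + 1 := by
      rw [div_eq_iff Zpos.ne']; linarith
    rw [e3, e1, hlog]
    ring
end

section
/- Let Γ be a nonempty subset of ℕ × Bool (pairs of a natural number and one of two symbols) such that Z = ∑_{(ℓ,s)∈Γ} 2^{-ℓ} is finite, and define a probability mass function on Γ by p(ℓ,s) = 2^{-ℓ}/Z. Then the Shannon entropy H = ∑_{(ℓ,s)∈Γ} p(ℓ,s) log₂(1/p(ℓ,s)) satisfies H ≤ 3. -/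
open Classical in
lemma hh_sum (Γ : Set (ℕ × Bool)) (f : ℕ → ℝ) (hf : Summable f) :
    (∑' x : Γ, f (x : ℕ × Bool).1) =
      ∑' n, ((if (n, false) ∈ Γ then (1:ℝ) else 0) + (if (n, true) ∈ Γ then 1 else 0)) * f n := by
  have h1 : Summable (fun x : ℕ × Bool => f x.1) := by
    have := summable_mul_of_summable_norm (f := f) (g := fun _ : Bool => (1:ℝ)) hf.norm
      (Summable.of_finite)
    simpa using this
  rw [tsum_subtype Γ (fun x : ℕ × Bool => f x.1), (h1.indicator Γ).tsum_prod]
  refine tsum_congr fun n => ?_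
  rw [tsum_fintype, Fintype.sum_bool]
  by_cases h : (n, false) ∈ Γ <;> by_cases h' : (n, true) ∈ Γ <;> simp [h, h'] <;> ring

lemma hh_log (S : ℝ) (h1 : 1 ≤ S) (h3 : S ≤ 3) : Real.logb 2 S + 1 / S ≤ 2 := by
  have hS : 0 < S := by linarith
  have key : ∀ (k : ℕ) (c : ℝ), 0 < k → S ^ k ≤ (2:ℝ) ^ c → Real.logb 2 S ≤ c / k := by
    intro k c hk h
    have hk' : (0:ℝ) < k := by exact_mod_cast hk
    rw [le_div_iff₀ hk', mul_comm, ← Real.logb_pow]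
    rwa [Real.logb_le_iff_le_rpow (by norm_num) (by positivity)]
  have hd : ∀ c : ℝ, 0 < c → c ≤ S → 1 / S ≤ 1 / c := fun c hc h =>
    one_div_le_one_div_of_le hc h
  rcases le_total S 2 with h | h
  · have := key 1 1 (by norm_num) (by norm_num; linarith)
    have := hd 1 (by norm_num) h1
    norm_num at *; linarith
  rcases le_total S (5/2) with h' | h'
  · have e : (2:ℝ) ^ (3:ℝ) = 8 := by norm_num
    have := key 2 3 (by norm_num) (by rw [e]; nlinarith)
    have := hd 2 (by norm_num) h
    norm_num at *; linarith
  · have e : (2:ℝ) ^ (8:ℝ) = 256 := by norm_num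
    have h5 : S ^ 5 ≤ 3 ^ 5 := by gcongr
    have := key 5 8 (by norm_num) (by rw [e]; linarith)
    have := hd (5/2) (by norm_num) h'
    norm_num at *; linarith

lemma hh_core (b : ℕ → ℝ) (hb0 : b 0 = 1 ∨ b 0 = 2) (hb : ∀ n, 0 ≤ b n) (hb2 : ∀ n, b n ≤ 2) :
    0 < (∑' d, b d * (1/2:ℝ)^d) ∧
    (∑' d, b d * ((1/2:ℝ)^d / (∑' d, b d * (1/2:ℝ)^d) *
      (d + Real.logb 2 (∑' d, b d * (1/2:ℝ)^d)))) ≤ 3 := by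
  have g0 : HasSum (fun d : ℕ => (1/2:ℝ)^d) 2 := hasSum_geometric_two
  have g1 : HasSum (fun d : ℕ => (d:ℝ) * (1/2:ℝ)^d) 2 := by
    have := hasSum_coe_mul_geometric_of_norm_lt_one (r := (1/2:ℝ)) (by norm_num)
    norm_num at this ⊢
    exact this
  have s0 : Summable (fun d => b d * (1/2:ℝ)^d) := by
    refine Summable.of_nonneg_of_le (fun d => mul_nonneg (hb d) (by positivity)) (fun d => ?_)
      (g0.summable.mul_left 2)
    exact mul_le_mul_of_nonneg_right (hb2 d) (by positivity)
  have s1 : Summable (fun d : ℕ => b d * (d * (1/2:ℝ)^d)) := by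
    refine Summable.of_nonneg_of_le (fun d => mul_nonneg (hb d) (by positivity)) (fun d => ?_)
      (g1.summable.mul_left 2)
    exact mul_le_mul_of_nonneg_right (hb2 d) (by positivity)
  set S := ∑' d, b d * (1/2:ℝ)^d with hS
  set T := ∑' d : ℕ, b d * (d * (1/2:ℝ)^d) with hT
  have hSlow : b 0 ≤ S := by
    have := s0.le_tsum 0 (fun d _ => mul_nonneg (hb d) (by positivity))
    rw [pow_zero, mul_one] at this
    exact this
  have hpt : HasSum (fun d : ℕ => if d = 0 then (2 - b 0 : ℝ) else 0) (2 - b 0) :=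
    hasSum_ite_eq 0 (2 - b 0)
  have hSup : S ≤ 2 + b 0 := by
    have := hasSum_le (f := fun d => b d * (1/2:ℝ)^d)
      (g := fun d => 2 * (1/2:ℝ)^d - (if d = 0 then (2 - b 0 : ℝ) else 0)) (fun d => ?_)
      s0.hasSum ((g0.mul_left 2).sub hpt)
    · linarith
    · by_cases h : d = 0
      · subst h; simp
      · simp only [h, if_false, sub_zero]
        exact mul_le_mul_of_nonneg_right (hb2 d) (by positivity)
  have hTS : T - S ≤ 2 - b 0 := by
    have := hasSum_le (f := fun d : ℕ => b d * (d * (1/2:ℝ)^d) - b d * (1/2:ℝ)^d)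
      (g := fun d : ℕ => 2 * ((d:ℝ) * (1/2:ℝ)^d) - 2 * (1/2:ℝ)^d
        + (if d = 0 then (2 - b 0 : ℝ) else 0)) (fun d => ?_)
      (s1.hasSum.sub s0.hasSum) (((g1.mul_left 2).sub (g0.mul_left 2)).add hpt)
    · linarith
    · by_cases h : d = 0
      · subst h; simp
      · simp only [h, if_false, add_zero]
        have hd : (1:ℝ) ≤ d := by exact_mod_cast Nat.one_le_iff_ne_zero.mpr h
        have : 0 ≤ (2 - b d) * ((d - 1) * (1/2:ℝ)^d) :=
          mul_nonneg (by linarith [hb2 d]) (mul_nonneg (by linarith) (by positivity))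
        linarith
  have hSpos : 0 < S := by rcases hb0 with h | h <;> linarith
  refine ⟨hSpos, ?_⟩
  have e : (∑' d : ℕ, b d * ((1/2:ℝ)^d / S * (d + Real.logb 2 S))) = T / S + Real.logb 2 S := by
    have h := (s1.hasSum.div_const S).add (s0.hasSum.mul_right (Real.logb 2 S / S))
    have h2 := h.tsum_eq
    rw [← hS, ← hT] at h2
    rw [show T / S + Real.logb 2 S = T / S + S * (Real.logb 2 S / S) by field_simp, ← h2]
    refine tsum_congr fun d => ?_
    ring
  rw [e]
  rcases hb0 with h | h
  · have := hh_log S (by linarith) (by linarith)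
    have : T / S ≤ 1 + 1 / S := by
      rw [div_le_iff₀ hSpos]; field_simp; linarith
    linarith
  · have h4 : Real.logb 2 S ≤ 2 := by
      rw [Real.logb_le_iff_le_rpow (by norm_num) hSpos]; norm_num; linarith
    have : T / S ≤ 1 := by
      rw [div_le_iff₀ hSpos]; linarith
    linarith

/-- For a nonempty `Γ ⊆ ℕ × Bool` with finite normalizing constant
`Z = ∑_{(ℓ,s) ∈ Γ} 2^{-ℓ}` and pmf `p (ℓ,s) = 2^{-ℓ}/Z`, the Shannon entropy
`∑_{(ℓ,s) ∈ Γ} p (ℓ,s) · log₂(1/p (ℓ,s))` is at most `3`. -/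
theorem han_hoshi_level_entropy_le_three
    (Γ : Set (ℕ × Bool)) (hΓ : Γ.Nonempty)
    (Z : ℝ) (hZ : Z = ∑' x : Γ, (2 : ℝ) ^ (-(((x : ℕ × Bool).1 : ℕ) : ℤ)))
    (hZfin : Summable fun x : Γ => (2 : ℝ) ^ (-(((x : ℕ × Bool).1 : ℕ) : ℤ)))
    (p : ℕ × Bool → ℝ)
    (hp : ∀ x ∈ Γ, p x = (2 : ℝ) ^ (-((x.1 : ℕ) : ℤ)) / Z) :
    (∑' x : Γ, p x * Real.logb 2 (1 / p x)) ≤ 3 := by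
  classical
  have hw : ∀ n : ℕ, (2:ℝ) ^ (-(n:ℤ)) = (1/2:ℝ)^n := by
    intro n; simp [zpow_neg]
  simp only [hw] at hZ hp
  have hex : ∃ n, ∃ s, (n, s) ∈ Γ := by
    obtain ⟨⟨n, s⟩, h⟩ := hΓ; exact ⟨n, s, h⟩
  set m := Nat.find hex with hm
  have hmem := Nat.find_spec hex
  rw [← hm] at hmem
  set a : ℕ → ℝ := fun n =>
    (if (n, false) ∈ Γ then (1:ℝ) else 0) + (if (n, true) ∈ Γ then 1 else 0) with ha
  have ha0 : ∀ n < m, a n = 0 := by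
    intro n hn
    have := Nat.find_min hex hn
    push Not at this
    simp [ha, this]
  have hsum : ∀ f : ℕ → ℝ, Summable f →
      (∑' x : Γ, f (x : ℕ × Bool).1) = ∑' d, a (d + m) * f (d + m) := by
    intro f hf
    rw [hh_sum Γ f hf]
    have hs : Summable (fun n => a n * f n) := by
      refine Summable.of_norm_bounded (g := fun n => 2 * |f n|) (hf.abs.mul_left 2) fun n => ?_
      rw [norm_mul, Real.norm_eq_abs, Real.norm_eq_abs]
      refine mul_le_mul_of_nonneg_right ?_ (abs_nonneg _)
      simp only [ha]
      split_ifs <;> norm_num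
    have := hs.sum_add_tsum_nat_add m
    rw [Finset.sum_eq_zero, zero_add] at this
    · exact this.symm
    · intro n hn
      rw [ha0 n (Finset.mem_range.mp hn), zero_mul]
  have hcore := hh_core (fun d => a (d + m)) (by
      obtain ⟨s, hs⟩ := hmem
      simp only [ha, zero_add]
      cases s <;> simp only [hs, if_true] <;> split_ifs <;> norm_num)
    (fun n => by simp only [ha]; split_ifs <;> norm_num)
    (fun n => by simp only [ha]; split_ifs <;> norm_num)
  set S := ∑' d, a (d + m) * (1/2:ℝ)^d with hS
  obtain ⟨hSpos, hle⟩ := hcore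
  have hZS : Z = S * (1/2:ℝ)^m := by
    rw [hZ, hsum (fun n => (1/2:ℝ)^n) summable_geometric_two, hS, ← tsum_mul_right]
    refine tsum_congr fun d => ?_
    ring
  have hZpos : 0 < Z := by rw [hZS]; positivity
  have hlogw : ∀ n : ℕ, Real.logb 2 ((1/2:ℝ)^n) = -n := by
    intro n
    rw [Real.logb_pow]; simp
  have hterm : ∀ x : Γ, p x * Real.logb 2 (1 / p x) =
      (fun n : ℕ => (1/2:ℝ)^n / Z * (n + Real.logb 2 Z)) (x : ℕ × Bool).1 := by
    intro x
    rw [hp x x.2]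
    congr 1
    rw [one_div_div, Real.logb_div hZpos.ne' (by positivity), hlogw]
    ring
  rw [tsum_congr hterm, hsum (fun n : ℕ => (1/2:ℝ)^n / Z * (n + Real.logb 2 Z))]
  · refine le_trans (le_of_eq (tsum_congr fun d => ?_)) hle
    congr 1
    have : Real.logb 2 Z = Real.logb 2 S - m := by
      rw [hZS, Real.logb_mul hSpos.ne' (by positivity), hlogw]; ring
    rw [this, hZS, pow_add]
    push_cast
    field_simp
    ring
  · have g1 : Summable (fun d : ℕ => (d:ℝ) * (1/2:ℝ)^d) :=
      (hasSum_coe_mul_geometric_of_norm_lt_one (r := (1/2:ℝ)) (by norm_num)).summable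
    have := (g1.div_const Z).add (summable_geometric_two.mul_right (Real.logb 2 Z / Z))
    refine this.congr fun d => ?_
    ring
end

section
/- Let 0 ≤ a ≤ b ≤ 1 be real numbers and let ℓ ≥ 1 be an integer. Then there are at most two integers k such that the dyadic interval [k·2^{-ℓ}, (k+1)·2^{-ℓ}] is contained in [a, b] while its parent dyadic interval [2⌊k/2⌋·2^{-ℓ}, (2⌊k/2⌋+2)·2^{-ℓ}] is not contained in [a, b]. -/
/-- at most two dyadic intervals of level `ℓ` fit inside `[a,b]`
while their parent dyadic interval does not. -/
theorem at_most_two_accepted_dyadic_intervals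
    (a b : ℝ) (h0 : 0 ≤ a) (hab : a ≤ b) (hb : b ≤ 1) (ℓ : ℕ) (hℓ : 1 ≤ ℓ) :
    Set.encard {k : ℤ |
      (a ≤ (k : ℝ) * (2 : ℝ) ^ (-(ℓ : ℤ)) ∧
        ((k : ℝ) + 1) * (2 : ℝ) ^ (-(ℓ : ℤ)) ≤ b) ∧
      ¬(a ≤ ((2 * (k / 2) : ℤ) : ℝ) * (2 : ℝ) ^ (-(ℓ : ℤ)) ∧
        ((2 * (k / 2) + 2 : ℤ) : ℝ) * (2 : ℝ) ^ (-(ℓ : ℤ)) ≤ b)} ≤ 2 := by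
  have hc : (0 : ℝ) < (2 : ℝ) ^ (-(ℓ : ℤ)) := by positivity
  generalize (2 : ℝ) ^ (-(ℓ : ℤ)) = c at hc
  have hA : ∀ k : ℤ, a ≤ (k : ℝ) * c ↔ ⌈a / c⌉ ≤ k := fun k => by
    rw [Int.ceil_le, div_le_iff₀ hc]
  have hB : ∀ k : ℤ, (k : ℝ) * c ≤ b ↔ k ≤ ⌊b / c⌋ := fun k => by
    rw [Int.le_floor, le_div_iff₀ hc]
  refine le_trans (Set.encard_le_encard (t := {⌈a / c⌉, ⌊b / c⌋ - 1}) ?_)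
    ((Set.encard_insert_le _ _).trans (by rw [Set.encard_singleton]; norm_num))
  rintro k ⟨⟨h1, h2⟩, h3⟩
  have h2' : ((k + 1 : ℤ) : ℝ) * c ≤ b := by push_cast; exact h2
  rw [hA] at h1
  rw [hB] at h2'
  rw [hA, hB] at h3
  simp only [Set.mem_insert_iff, Set.mem_singleton_iff]
  omega
end

section
/- Let N ≥ 3 be an odd integer and let A be uniformly distributed on {0, 1, …, N−1}. Under the conditional probability measure given the event {A < N − 1}, the parity A mod 2 is uniformly distributed on {0,1}, the quotient ⌊A/2⌋ is uniformly distributed on {0, 1, …, (N−1)/2 − 1}, and A mod 2 and ⌊A/2⌋ are independent. -/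
open MeasureTheory ProbabilityTheory
open scoped ENNReal

open Classical in
lemma card_split_aux (m : ℕ) (s t : Set ℕ) :
    ((Finset.range (2 * m)).filter (fun x => x % 2 ∈ s ∧ x / 2 ∈ t)).card =
      ((Finset.range 2).filter (· ∈ s)).card * ((Finset.range m).filter (· ∈ t)).card := by
  rw [← Finset.card_product]
  refine Finset.card_bij' (fun x _ => (x % 2, x / 2)) (fun p _ => 2 * p.2 + p.1) ?_ ?_ ?_ ?_
  · intro a ha
    simp only [Finset.mem_filter, Finset.mem_range, Finset.mem_product] at ha ⊢
    exact ⟨⟨by omega, ha.2.1⟩, by omega, ha.2.2⟩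
  · rintro ⟨a, b⟩ ha
    simp only [Finset.mem_filter, Finset.mem_range, Finset.mem_product] at ha ⊢
    have h1 : (2 * b + a) % 2 = a := by omega
    have h2 : (2 * b + a) / 2 = b := by omega
    rw [h1, h2]
    exact ⟨by omega, ha.1.2, ha.2.2⟩
  · intro a ha
    simp only
    omega
  · rintro ⟨a, b⟩ ha
    simp only [Finset.mem_filter, Finset.mem_range, Finset.mem_product] at ha
    simp only [Prod.mk.injEq]
    omega

/-- for odd `N ≥ 3` and `A` uniform on `{0,…,N−1}`, conditionally on
`A < N − 1` the parity `A % 2` is a fair bit, the quotient `⌊A/2⌋` is uniform on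
`{0,…,(N−1)/2 − 1}`, and the two are independent. -/
theorem uniform_odd_conditional_split
    {Ω : Type*} [MeasurableSpace Ω] (μ : Measure Ω) [IsProbabilityMeasure μ]
    (N : ℕ) (hN : 3 ≤ N) (hNodd : Odd N)
    (A : Ω → ℕ) (hAmeas : Measurable A)
    (hAunif : ∀ k : ℕ,
      μ {ω | A ω = k} = if k < N then (1 : ℝ≥0∞) / (N : ℝ≥0∞) else 0) :
    (∀ b : ℕ,
      μ[|{ω | A ω < N - 1}] {ω | A ω % 2 = b} =
        if b < 2 then (1 : ℝ≥0∞) / 2 else 0) ∧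
    (∀ k : ℕ,
      μ[|{ω | A ω < N - 1}] {ω | A ω / 2 = k} =
        if k < (N - 1) / 2 then (1 : ℝ≥0∞) / (((N - 1) / 2 : ℕ) : ℝ≥0∞) else 0) ∧
    IndepFun (fun ω => A ω % 2) (fun ω => A ω / 2) μ[|{ω | A ω < N - 1}] := by
  classical
  obtain ⟨m, rfl⟩ := hNodd
  have e1 : 2 * m + 1 - 1 = 2 * m := by omega
  have e2 : 2 * m / 2 = m := by omega
  rw [e1, e2]
  have hm : (m : ℝ≥0∞) ≠ 0 := by
    have : m ≠ 0 := by omega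
    exact_mod_cast this
  have hm' : (m : ℝ≥0∞) ≠ ∞ := ENNReal.natCast_ne_top m
  have hfin : ∀ S : Finset ℕ, S ⊆ Finset.range (2 * m) →
      μ (A ⁻¹' S) = S.card * ((2 * m + 1 : ℕ) : ℝ≥0∞)⁻¹ := by
    intro S hS
    rw [← sum_measure_preimage_singleton S
      (fun y _ => hAmeas (measurableSet_singleton y))]
    rw [Finset.sum_congr rfl (g := fun _ => ((2 * m + 1 : ℕ) : ℝ≥0∞)⁻¹)]
    · simp
    · intro x hx
      have := hAunif x
      have hx' := Finset.mem_range.1 (hS hx)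
      rw [if_pos (by omega), one_div] at this
      exact this
  have hE : {ω | A ω < 2 * m} = A ⁻¹' (Finset.range (2 * m) : Finset ℕ) := by
    ext; simp
  have key : ∀ s t : Set ℕ,
      μ[|{ω | A ω < 2 * m}] ((fun ω => A ω % 2) ⁻¹' s ∩ (fun ω => A ω / 2) ⁻¹' t) =
      (((Finset.range 2).filter (· ∈ s)).card / 2) *
        (((Finset.range m).filter (· ∈ t)).card / m) := by
    intro s t
    rw [cond_apply (hE ▸ hAmeas (Finset.measurableSet _))]
    have : {ω | A ω < 2 * m} ∩ ((fun ω => A ω % 2) ⁻¹' s ∩ (fun ω => A ω / 2) ⁻¹' t) =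
        A ⁻¹' ((Finset.range (2 * m)).filter (fun x => x % 2 ∈ s ∧ x / 2 ∈ t) : Finset ℕ) := by
      ext; simp
    rw [this, hE, hfin _ (Finset.Subset.refl _), hfin _ (Finset.filter_subset _ _),
      card_split_aux, Finset.card_range]
    have hN0 : ((2 * m + 1 : ℕ) : ℝ≥0∞) ≠ 0 := by exact_mod_cast (by omega : 2 * m + 1 ≠ 0)
    have hNt : ((2 * m + 1 : ℕ) : ℝ≥0∞) ≠ ∞ := ENNReal.natCast_ne_top _
    generalize ((2 * m + 1 : ℕ) : ℝ≥0∞) = n at *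
    push_cast
    rw [ENNReal.mul_inv (Or.inr (by simpa using hN0)) (Or.inr (by simpa using hNt)), inv_inv,
      ENNReal.mul_inv (Or.inl (by simp)) (Or.inl (by simp)), div_eq_mul_inv, div_eq_mul_inv]
    generalize (((Finset.range 2).filter (· ∈ s)).card : ℝ≥0∞) = x
    generalize (((Finset.range m).filter (· ∈ t)).card : ℝ≥0∞) = y
    calc _ = (n * n⁻¹) * (x * 2⁻¹ * (y * (m : ℝ≥0∞)⁻¹)) := by ring
      _ = _ := by rw [ENNReal.mul_inv_cancel hN0 hNt, one_mul]
  have k1 : ∀ s : Set ℕ, μ[|{ω | A ω < 2 * m}] ((fun ω => A ω % 2) ⁻¹' s) =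
      ((Finset.range 2).filter (· ∈ s)).card / 2 := by
    intro s
    have := key s Set.univ
    simpa [ENNReal.div_self hm hm'] using this
  have k2 : ∀ t : Set ℕ, μ[|{ω | A ω < 2 * m}] ((fun ω => A ω / 2) ⁻¹' t) =
      ((Finset.range m).filter (· ∈ t)).card / m := by
    intro t
    have := key Set.univ t
    simpa [ENNReal.div_self] using this
  refine ⟨fun b => ?_, fun k => ?_, ?_⟩
  · refine (k1 {b}).trans ?_
    simp only [Set.mem_singleton_iff, Finset.filter_eq', Finset.mem_range]
    split_ifs <;> simp
  · refine (k2 {k}).trans ?_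
    simp only [Set.mem_singleton_iff, Finset.filter_eq', Finset.mem_range]
    split_ifs <;> simp
  · rw [indepFun_iff_measure_inter_preimage_eq_mul]
    intro s t _ _
    rw [key, k1, k2]
end

section
/- Let T : ℕ → ℝ satisfy T(1) = 0, T(2n) = 1 + T(n) for all n ≥ 1, and T(2n+1) = (2n/(2n+1))·(1 + T(n)) for all n ≥ 1. Then for every integer N ≥ 1, T(N) > log₂(N) − 3. -/
theorem toss_aux
    (T : ℕ → ℝ) (h1 : T 1 = 0)
    (heven : ∀ n : ℕ, 1 ≤ n → T (2 * n) = 1 + T n)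
    (hodd : ∀ n : ℕ, 1 ≤ n →
      T (2 * n + 1) = ((2 * n : ℝ) / (2 * n + 1)) * (1 + T n)) :
    ∀ k N : ℕ, 2 ^ k ≤ N → N < 2 ^ (k + 1) →
      (N : ℝ) * T N ≥ k * N - (2 ^ (k + 1) - 2 - k) := by
  intro k
  induction k with
  | zero =>
    intro N ha hb
    have : N = 1 := by norm_num at ha hb; omega
    subst this
    norm_num [h1]
  | succ k ih =>
    intro N ha hb
    obtain ⟨n, hn⟩ : ∃ n, N = 2 * n ∨ N = 2 * n + 1 := ⟨N / 2, by omega⟩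
    have hp : 0 < 2 ^ k := by positivity
    have h2 : 2 ^ k ≤ n := by rw [pow_succ] at ha; omega
    have h3 : n < 2 ^ (k + 1) := by rw [pow_succ] at hb; omega
    have h4 := ih n h2 h3
    have hk : (0 : ℝ) ≤ k := by positivity
    rcases hn with rfl | rfl
    · rw [heven n (by omega)]
      push_cast
      rw [pow_succ (2 : ℝ) (k + 1)]
      nlinarith
    · rw [hodd n (by omega)]
      have h5 : ((2 * n + 1 : ℕ) : ℝ) * ((2 * n : ℝ) / (2 * n + 1) * (1 + T n))
          = 2 * n + 2 * (n * T n) := by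
        push_cast
        field_simp
      rw [h5]
      push_cast
      rw [pow_succ (2 : ℝ) (k + 1)]
      nlinarith

/-- the expected-toss recurrence `T(1)=0`, `T(2n)=1+T(n)`,
`T(2n+1) = (2n/(2n+1))·(1+T(n))` satisfies `T(N) > log₂(N) − 3`. -/
theorem toss_count_gt_log_sub_three
    (T : ℕ → ℝ) (h1 : T 1 = 0)
    (heven : ∀ n : ℕ, 1 ≤ n → T (2 * n) = 1 + T n)
    (hodd : ∀ n : ℕ, 1 ≤ n →
      T (2 * n + 1) = ((2 * n : ℝ) / (2 * n + 1)) * (1 + T n)) :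
    ∀ N : ℕ, 1 ≤ N → T N > Real.logb 2 N - 3 := by
  intro N hN
  have ha : 2 ^ Nat.log 2 N ≤ N := Nat.pow_log_le_self 2 (by omega)
  have hb : N < 2 ^ (Nat.log 2 N + 1) := Nat.lt_pow_succ_log_self (by norm_num) N
  generalize Nat.log 2 N = k at ha hb
  have h := toss_aux T h1 heven hodd k N ha hb
  have hN0 : (0 : ℝ) < N := by exact_mod_cast hN
  have hk : (0 : ℝ) ≤ k := by positivity
  have ha' : (2 : ℝ) ^ k ≤ N := by exact_mod_cast ha
  have hb' : (N : ℝ) < 2 ^ (k + 1) := by exact_mod_cast hb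
  have hl : Real.logb 2 N < k + 1 := by
    rw [Real.logb_lt_iff_lt_rpow (by norm_num) hN0]
    exact_mod_cast hb'
  have ht : (k : ℝ) - 2 < T N := by
    refine lt_of_mul_lt_mul_left (a := (N : ℝ)) ?_ hN0.le
    rw [pow_succ] at h
    nlinarith
  linarith
end

section
/- Let T : ℕ → ℝ satisfy T(1) = 0, T(2n) = 1 + T(n) for all n ≥ 1, and T(2n+1) = (2n/(2n+1))·(1 + T(n)) for all n ≥ 1. Then for every integer N ≥ 1, T(N) ≥ (1 + 2/N)·log₂(N) − 3. -/
/-- the expected-toss recurrence `T(1)=0`, `T(2n)=1+T(n)`,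
`T(2n+1) = (2n/(2n+1))·(1+T(n))` satisfies the strengthened bound
`T(N) ≥ (1 + 2/N)·log₂(N) − 3`. -/
theorem toss_count_ge_strengthened_bound
    (T : ℕ → ℝ) (h1 : T 1 = 0)
    (heven : ∀ n : ℕ, 1 ≤ n → T (2 * n) = 1 + T n)
    (hodd : ∀ n : ℕ, 1 ≤ n →
      T (2 * n + 1) = ((2 * n : ℝ) / (2 * n + 1)) * (1 + T n)) :
    ∀ N : ℕ, 1 ≤ N → T N ≥ (1 + 2 / (N : ℝ)) * Real.logb 2 N - 3 := by
  have hb : ∀ (x : ℝ) (k : ℕ), 0 < x → x ≤ 2 ^ k → Real.logb 2 x ≤ k := by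
    intro x k hx hk
    rw [Real.logb_le_iff_le_rpow (by norm_num) hx, Real.rpow_natCast]
    exact hk
  have T2 : T 2 = 1 := by
    have := heven 1 le_rfl
    norm_num [h1] at this
    exact this
  have T3 : T 3 = 2 / 3 := by
    have := hodd 1 le_rfl
    norm_num [h1] at this
    exact this
  have T5 : T 5 = 8 / 5 := by
    have := hodd 2 (by norm_num)
    norm_num [T2] at this
    exact this
  have T7 : T 7 = 10 / 7 := by
    have := hodd 3 (by norm_num)
    norm_num [T3] at this
    exact this
  intro N
  induction N using Nat.strong_induction_on with
  | _ N ih =>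
  intro hN
  rcases Nat.even_or_odd' N with ⟨n, rfl | rfl⟩
  · have hn : 1 ≤ n := by omega
    have ihn := ih n (by omega) hn
    rcases Nat.lt_or_ge n 2 with h | h
    · obtain rfl : n = 1 := by omega
      norm_num [T2]
    · have hn0 : (2 : ℝ) ≤ n := by exact_mod_cast h
      have hL : 1 ≤ Real.logb 2 n := by
        rw [Real.le_logb_iff_rpow_le (by norm_num) (by linarith)]
        simpa using hn0
      rw [heven n hn]
      push_cast
      rw [Real.logb_mul (by norm_num) (by linarith), Real.logb_self_eq_one (by norm_num)]
      have e : (1 + 2 / (n : ℝ)) * Real.logb 2 n - 3 + 1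
          - ((1 + 2 / (2 * (n : ℝ))) * (1 + Real.logb 2 n) - 3)
          = (Real.logb 2 n - 1) / n := by
        field_simp
        ring
      have : 0 ≤ (Real.logb 2 n - 1) / (n : ℝ) := div_nonneg (by linarith) (by linarith)
      linarith
  · rcases Nat.lt_or_ge n 4 with h | h
    · interval_cases n
      · norm_num [h1]
      · have := hb 3 2 (by norm_num) (by norm_num)
        norm_num [T3] at this ⊢
        linarith
      · have := hb 5 3 (by norm_num) (by norm_num)
        norm_num [T5] at this ⊢
        linarith
      · have := hb 7 3 (by norm_num) (by norm_num)
        norm_num [T7] at this ⊢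
        linarith
    · have hn : 1 ≤ n := by omega
      have ihn := ih n (by omega) hn
      have hn0 : (4 : ℝ) ≤ n := by exact_mod_cast h
      have hL : 2 ≤ Real.logb 2 n := by
        rw [Real.le_logb_iff_rpow_le (by norm_num) (by linarith)]
        norm_num
        exact h
      rw [hodd n hn]
      push_cast
      generalize T n = t at *
      have hl2 : (0.6931 : ℝ) < Real.log 2 := by linarith [Real.log_two_gt_d9]
      generalize hx : (n : ℝ) = x at *
      have hx0 : 0 < x := by linarith
      have hM : Real.logb 2 (2 * x + 1) = 1 + Real.logb 2 x + Real.logb 2 (1 + 1 / (2 * x)) := by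
        have : 2 * x + 1 = 2 * x * (1 + 1 / (2 * x)) := by field_simp
        rw [this, Real.logb_mul (by positivity) (by positivity),
          Real.logb_mul (by norm_num) (by positivity), Real.logb_self_eq_one (by norm_num)]
      have hd : (2 * x + 3) * Real.logb 2 (1 + 1 / (2 * x)) ≤ 2 := by
        have h3 : Real.log (1 + 1 / (2 * x)) ≤ 1 / (2 * x) := by
          have := Real.log_le_sub_one_of_pos (show 0 < 1 + 1 / (2 * x) by positivity)
          linarith
        rw [Real.logb, ← mul_div_assoc, div_le_iff₀ (by linarith)]
        calc _ ≤ (2 * x + 3) * (1 / (2 * x)) := by gcongr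
          _ ≤ 2 * 0.6931 := by
            rw [mul_one_div, div_le_iff₀ (by positivity)]
            linarith
          _ ≤ _ := by linarith
      rw [hM]
      generalize Real.logb 2 (1 + 1 / (2 * x)) = d at *
      generalize Real.logb 2 x = L at *
      have h5 : 2 * x / (2 * x + 1) * (1 + t)
          ≥ 2 * x / (2 * x + 1) * (1 + ((1 + 2 / x) * L - 3)) := by
        gcongr
      have e : 2 * x / (2 * x + 1) * (1 + ((1 + 2 / x) * L - 3))
          - ((1 + 2 / (2 * x + 1)) * (1 + L + d) - 3) = (L - (2 * x + 3) * d) / (2 * x + 1) := by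
        field_simp
        ring
      have : 0 ≤ (L - (2 * x + 3) * d) / (2 * x + 1) := div_nonneg (by linarith) (by linarith)
      linarith
end

section
/- For every real number x ≥ 9, the inequality (x + 3)·log₂(x − 1) ≥ (x + 2)·log₂(x) + 1 holds. -/
/-- for `x ≥ 9`, `(x+3)·log₂(x−1) ≥ (x+2)·log₂(x) + 1`. -/
theorem key_log_inequality (x : ℝ) (hx : 9 ≤ x) :
    (x + 3) * Real.logb 2 (x - 1) ≥ (x + 2) * Real.logb 2 x + 1 := by
  have h2 := Real.log_two_gt_d9
  have hl2 : 0 < Real.log 2 := by linarith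
  have hy : 0 < x - 1 := by linarith
  have h8 : 3 * Real.log 2 ≤ Real.log (x - 1) := by
    have h : Real.log ((2:ℝ) ^ 3) ≤ Real.log (x - 1) :=
      Real.log_le_log (by norm_num) (by norm_num; linarith)
    rw [Real.log_pow] at h
    exact_mod_cast h
  have h1 : Real.log x - Real.log (x - 1) ≤ 1 / (x - 1) := by
    rw [← Real.log_div (by linarith) hy.ne']
    have h := Real.log_le_sub_one_of_pos (show 0 < x / (x - 1) from div_pos (by linarith) hy)
    have e : x / (x - 1) - 1 = 1 / (x - 1) := by field_simp; ring
    linarith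
  have h3 : (x + 2) * (Real.log x - Real.log (x - 1)) ≤ 1.375 := by
    calc _ ≤ (x + 2) * (1 / (x - 1)) := mul_le_mul_of_nonneg_left h1 (by linarith)
      _ ≤ 1.375 := by
        rw [mul_one_div, div_le_iff₀ hy]
        linarith
  have key : (x + 2) * Real.log x + Real.log 2 ≤ (x + 3) * Real.log (x - 1) := by
    linarith
  have e : (x + 2) * Real.logb 2 x + 1 = ((x + 2) * Real.log x + Real.log 2) / Real.log 2 := by
    unfold Real.logb; field_simp
  have e' : (x + 3) * Real.logb 2 (x - 1) = ((x + 3) * Real.log (x - 1)) / Real.log 2 := by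
    unfold Real.logb; field_simp
  rw [e, e']
  exact div_le_div_of_nonneg_right key hl2.le
end

section
/- For every real number x ≥ 9, the inequality log₂(x) ≥ 1 + log₂(e)·(x + 3)/(x − 1) holds, where log₂(e) = 1/ln(2). -/
/-- for `x ≥ 9`, `log₂(x) ≥ 1 + log₂(e)·(x+3)/(x−1)`,
where `log₂(e) = 1/ln 2`. -/
theorem reduced_log_inequality (x : ℝ) (hx : 9 ≤ x) :
    Real.logb 2 x ≥ 1 + Real.logb 2 (Real.exp 1) * ((x + 3) / (x - 1)) := by
  have h2 : 0 < Real.log 2 := Real.log_pos (by norm_num)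
  have hq : (x + 3) / (x - 1) ≤ 3 / 2 := by
    rw [div_le_div_iff₀ (by linarith) (by norm_num)]
    linarith
  have h9 : Real.log 9 = 2 * Real.log 3 := by
    rw [show (9 : ℝ) = 3 ^ 2 by norm_num, Real.log_pow]
    norm_num
  have hl : Real.log 9 ≤ Real.log x := Real.log_le_log (by norm_num) hx
  have ha := Real.log_three_gt_d9
  have hb := Real.log_two_lt_d9
  have key : Real.log 2 + (x + 3) / (x - 1) ≤ Real.log x := by
    norm_num at ha hb
    linarith
  have e : 1 + Real.logb 2 (Real.exp 1) * ((x + 3) / (x - 1))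
      = (Real.log 2 + (x + 3) / (x - 1)) / Real.log 2 := by
    rw [Real.logb, Real.log_exp, add_div (Real.log 2), div_self h2.ne', one_div_mul_eq_div]
  rw [ge_iff_le, e, Real.logb]
  exact div_le_div_of_nonneg_right key h2.le
end
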